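/- Let G = (V,E) be a finite DAG and define the maximal ancestors of a node v as ma_G(v) = {w ∈ an_G(v) : w has no parents in G}. Then the partition of V into equivalence classes of the relation v ∼ w ⟺ ma_G(v) = ma_G(w) is a valid coarsening partition of G; that is, the quotient graph over these classes, with an edge between distinct classes π → ρ whenever some v ∈ π and w ∈ ρ satisfy v → w ∈ E, is acyclic. -/

import Mathlib

/-- The quotient-graph edge relation induced by `E` on the parts of `P`. -/
def QuotRel {V : Type*} (E : V → V → Prop) (P : Set (Set V)) (π ρ : Set V) : Prop :=
  π ∈ P ∧ ρ ∈ P ∧ π ≠ ρ ∧ ∃ v ∈ π, ∃ w ∈ ρ, E v w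

/-- `P` is a valid coarsening partition of the DAG with edges `E`:
a partition of `V` whose quotient graph is acyclic. -/
def ValidCoarsening {V : Type*} (E : V → V → Prop) (P : Set (Set V)) : Prop :=
  Setoid.IsPartition P ∧ ∀ π, ¬ Relation.TransGen (QuotRel E P) π π

/-- `P` refines `Q`: every part of `P` is contained in some part of `Q`. -/
def Refines {V : Type*} (P Q : Set (Set V)) : Prop :=
  ∀ π ∈ P, ∃ ρ ∈ Q, π ⊆ ρ

/-- The common refinement of two partitions: the nonempty intersections of their parts. -/
def CommonRefinement {V : Type*} (P Q : Set (Set V)) : Set (Set V) :=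
  {s | s.Nonempty ∧ ∃ U ∈ P, ∃ W ∈ Q, s = U ∩ W}

/-- The maximal ancestors of `v`: ancestors of `v` (including `v` itself) that have
no parents in the DAG. -/
def MaximalAncestors {V : Type*} (E : V → V → Prop) (v : V) : Set V :=
  {w | Relation.ReflTransGen E w v ∧ ∀ u, ¬ E u w}

/-! An edge `v → w` gives `ma(v) ⊆ ma(w)`, so an edge between distinct parts strictly enlarges the
set of maximal ancestors. Hence that set, which is constant on each part, would have to be a strict
subset of itself along a cycle of parts. -/

section MonotoneFibers

variable {V α : Type*} [PartialOrder α] {E : V → V → Prop} {f : V → α} {π ρ : Set V} {a b : V}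

theorem QuotRel.apply_lt_apply (hf : ∀ v w, E v w → f v ≤ f w)
    (h : QuotRel E (Setoid.ker f).classes π ρ) (ha : a ∈ π) (hb : b ∈ ρ) : f a < f b := by
  obtain ⟨⟨x, rfl⟩, ⟨y, rfl⟩, hne, v, hv, w, hw, hvw⟩ := h
  simp only [Set.mem_ofPred_eq, Setoid.ker_def] at ha hb hv hw
  have hxy : f x ≤ f y := hv ▸ hw ▸ hf v w hvw
  have hxy_ne : f x ≠ f y := fun he ↦ hne (by simp only [Setoid.ker_def, he])
  rw [ha, hb]
  exact hxy.lt_of_ne hxy_ne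

theorem QuotRel.apply_lt_apply_of_transGen (hf : ∀ v w, E v w → f v ≤ f w)
    (h : Relation.TransGen (QuotRel E (Setoid.ker f).classes) π ρ) (ha : a ∈ π) (hb : b ∈ ρ) :
    f a < f b := by
  induction h generalizing b with
  | single h => exact h.apply_lt_apply hf ha hb
  | tail _ h ih =>
    obtain ⟨c, hc, -⟩ := h.2.2.2
    exact (ih hc).trans (h.apply_lt_apply hf hc hb)

theorem validCoarsening_classes_ker (hf : ∀ v w, E v w → f v ≤ f w) :
    ValidCoarsening E (Setoid.ker f).classes := by
  refine ⟨Setoid.isPartition_classes _, fun π hcycle ↦ ?_⟩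
  obtain ⟨_, ⟨_, _, _, v, hv, _⟩, _⟩ := Relation.TransGen.head'_iff.mp hcycle
  exact (QuotRel.apply_lt_apply_of_transGen hf hcycle hv hv).false

end MonotoneFibers

theorem maximalAncestors_subset_of_reflTransGen {V : Type*} {E : V → V → Prop} {v w : V}
    (h : Relation.ReflTransGen E v w) : MaximalAncestors E v ⊆ MaximalAncestors E w :=
  fun _ ⟨huv, hu⟩ ↦ ⟨huv.trans h, hu⟩

theorem marginalCoarsening_valid_general {V : Type*} (E : V → V → Prop) :
    ValidCoarsening E
      {s : Set V | ∃ v : V,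
        s = {w : V | MaximalAncestors E w = MaximalAncestors E v}} :=
  validCoarsening_classes_ker fun _ _ hvw ↦ maximalAncestors_subset_of_reflTransGen (.single hvw)

/-- the partition of `V` into equivalence classes of
`v ∼ w ↔ ma_G(v) = ma_G(w)` is a valid coarsening partition of the finite DAG `G`:
it is a partition and its quotient graph is acyclic. -/
theorem marginalCoarsening_valid
    {V : Type*} [Fintype V] (E : V → V → Prop)
    (hacyc : ∀ v, ¬ Relation.TransGen E v v) :
    ValidCoarsening E
      {s : Set V | ∃ v : V,
        s = {w : V | MaximalAncestors E w = MaximalAncestors E v}} :=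
  marginalCoarsening_valid_general E
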